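/- Fix 0 < δ < 1/2. There is a constant C (depending on δ) such that for every h ∈ C₀^∞(ℝ₊×ℝ³) and every t ≥ 0: ‖h'(t,·)‖_{L⁶({x : |x| ∉ [(1−δ)t, (1+δ)t]})} ≤ C⟨t⟩^{−1} ( Σ_{|α|≤1} ‖Γ^α h'(t,·)‖₂ + ‖⟨t+r⟩ □h(t,·)‖₂ ). -/

import Mathlib

open MeasureTheory Real Finset

noncomputable section

/-- Points of space-time `ℝ×ℝ³`, written `X = (x₀,x₁,x₂,x₃)` with `x₀ = t`. -/
abbrev Pt : Type := Fin 4 → ℝ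
/-- Points of space `ℝ³`. -/
abbrev Sp : Type := Fin 3 → ℝ

/-- Space-time partial derivative `∂_a`. -/
def pd (a : Fin 4) (u : Pt → ℝ) : Pt → ℝ := fun X => fderiv ℝ u X (Pi.single a 1)

/-- Rotation field `Ω_{ij} = x_i ∂_j - x_j ∂_i` (space-time indices). -/
def rot (i j : Fin 4) (u : Pt → ℝ) : Pt → ℝ := fun X => X i * pd j u X - X j * pd i u X

/-- Scaling field `S = t ∂_t + x·∇_x = x^a ∂_a`. -/
def scal (u : Pt → ℝ) : Pt → ℝ := fun X => ∑ a, X a * pd a u X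

/-- The eight vector fields `Γ = (∂, Ω, S)`. -/
def Gam : Fin 8 → (Pt → ℝ) → Pt → ℝ :=
  ![pd 0, pd 1, pd 2, pd 3, rot 1 2, rot 1 3, rot 2 3, scal]

/-- `Γ^α` for a multi-index `α` (a word in the eight fields) of length `m`. -/
def GamComp : ∀ {m : ℕ}, (Fin m → Fin 8) → (Pt → ℝ) → Pt → ℝ
  | 0, _, u => u
  | _ + 1, α, u => Gam (α 0) (GamComp (fun i => α i.succ) u)

/-- Euclidean length `r = |x|` of a spatial point. -/
def rad (x : Sp) : ℝ := Real.sqrt (∑ i, (x i) ^ 2)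

/-- Japanese bracket `⟨z⟩ = (1+z²)^{1/2}`. -/
def jb (z : ℝ) : ℝ := Real.sqrt (1 + z ^ 2)

/-- Euclidean norm `|∂u|` of the space-time gradient. -/
def gradNorm (u : Pt → ℝ) (X : Pt) : ℝ := Real.sqrt (∑ a, (pd a u X) ^ 2)

/-- The unit-speed d'Alembertian `□ = ∂_t² - Δ_x`. -/
def box1 (u : Pt → ℝ) : Pt → ℝ := fun X =>
  pd 0 (pd 0 u) X - ∑ j : Fin 3, pd j.succ (pd j.succ u) X

/-- The d'Alembertian `∂_t² - c²Δ_x` with speed `c`. -/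
def boxc (c : ℝ) (u : Pt → ℝ) : Pt → ℝ := fun X =>
  pd 0 (pd 0 u) X - c ^ 2 * ∑ j : Fin 3, pd j.succ (pd j.succ u) X


/-- Spatial partial derivative. -/
def DD (j : Fin 3) (f : Sp → ℝ) : Sp → ℝ := fun x => fderiv ℝ f x (Pi.single j 1)

lemma DD_smooth {f : Sp → ℝ} (hf : ContDiff ℝ (⊤ : ℕ∞) f) (j : Fin 3) :
    ContDiff ℝ (⊤ : ℕ∞) (DD j f) := by
  unfold DD
  exact (hf.fderiv_right (m := (⊤ : ℕ∞)) (by simp)).clm_apply contDiff_const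

lemma DD_supp {f : Sp → ℝ} (hf : HasCompactSupport f) (j : Fin 3) :
    HasCompactSupport (DD j f) := hf.fderiv_apply (𝕜 := ℝ) _

lemma pd_smooth {f : Pt → ℝ} (hf : ContDiff ℝ (⊤ : ℕ∞) f) (j : Fin 4) :
    ContDiff ℝ (⊤ : ℕ∞) (pd j f) := by
  unfold pd
  exact (hf.fderiv_right (m := (⊤ : ℕ∞)) (by simp)).clm_apply contDiff_const

lemma pd_supp {f : Pt → ℝ} (hf : HasCompactSupport f) (j : Fin 4) :
    HasCompactSupport (pd j f) := hf.fderiv_apply (𝕜 := ℝ) _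

lemma pd_comm {f : Pt → ℝ} (hf : ContDiff ℝ (⊤ : ℕ∞) f) (a b : Fin 4) (X : Pt) :
    pd a (pd b f) X = pd b (pd a f) X := by
  have hs : IsSymmSndFDerivAt ℝ f X := by
    apply ContDiffAt.isSymmSndFDerivAt (n := (⊤ : ℕ∞)) hf.contDiffAt
    simp only [minSmoothness_of_isRCLikeNormedField]
    exact WithTop.coe_le_coe.2 (le_top : (2 : ℕ∞) ≤ ⊤)
  have hd : DifferentiableAt ℝ (fderiv ℝ f) X :=
    ((hf.fderiv_right (m := (⊤ : ℕ∞)) (by simp)).differentiable (by simp)) X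
  have key : ∀ v w : Pt, fderiv ℝ (fun Y => fderiv ℝ f Y v) X w = fderiv ℝ (fderiv ℝ f) X w v := by
    intro v w
    rw [fderiv_clm_apply hd (differentiableAt_const v)]
    simp
  unfold pd
  rw [key, key]
  exact hs _ _

lemma DD_comm {f : Sp → ℝ} (hf : ContDiff ℝ (⊤ : ℕ∞) f) (a b : Fin 3) (X : Sp) :
    DD a (DD b f) X = DD b (DD a f) X := by
  have hs : IsSymmSndFDerivAt ℝ f X := by
    apply ContDiffAt.isSymmSndFDerivAt (n := (⊤ : ℕ∞)) hf.contDiffAt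
    simp only [minSmoothness_of_isRCLikeNormedField]
    exact WithTop.coe_le_coe.2 (le_top : (2 : ℕ∞) ≤ ⊤)
  have hd : DifferentiableAt ℝ (fderiv ℝ f) X :=
    ((hf.fderiv_right (m := (⊤ : ℕ∞)) (by simp)).differentiable (by simp)) X
  have key : ∀ v w : Sp, fderiv ℝ (fun Y => fderiv ℝ f Y v) X w = fderiv ℝ (fderiv ℝ f) X w v := by
    intro v w
    rw [fderiv_clm_apply hd (differentiableAt_const v)]
    simp
  unfold DD
  rw [key, key]
  exact hs _ _

lemma intg_mul {f g : Sp → ℝ} (hf : Continuous f) (hg : Continuous g) (hs : HasCompactSupport f) :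
    Integrable (fun x => f x * g x) :=
  (hf.mul hg).integrable_of_hasCompactSupport hs.mul_right

lemma ibp {f g : Sp → ℝ} (hf : ContDiff ℝ (⊤ : ℕ∞) f) (hg : ContDiff ℝ (⊤ : ℕ∞) g)
    (hs : HasCompactSupport f) (j : Fin 3) :
    ∫ x, f x * DD j g x = - ∫ x, DD j f x * g x := by
  unfold DD
  apply integral_mul_fderiv_eq_neg_fderiv_mul_of_integrable
  · exact intg_mul (DD_smooth hf j).continuous hg.continuous (DD_supp hs j)
  · exact intg_mul hf.continuous (DD_smooth hg j).continuous hs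
  · exact intg_mul hf.continuous hg.continuous hs
  · intro x _; exact hf.differentiable (by simp) x
  · intro x _; exact hg.differentiable (by simp) x

lemma swap {f g : Sp → ℝ} (hf : ContDiff ℝ (⊤ : ℕ∞) f) (hg : ContDiff ℝ (⊤ : ℕ∞) g)
    (hs : HasCompactSupport f) (i j : Fin 3) :
    ∫ x, DD i f x * DD j g x = ∫ x, DD j f x * DD i g x := by
  have h1 := ibp hf (DD_smooth hg j) hs i
  have h2 := ibp hf (DD_smooth hg i) hs j
  have h3 : ∫ x, f x * DD i (DD j g) x = ∫ x, f x * DD j (DD i g) x := by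
    congr 1; ext x; rw [DD_comm hg]
  linarith

/-- div-curl identity -/
lemma divcurl (w : Fin 3 → Sp → ℝ) (hw : ∀ i, ContDiff ℝ (⊤ : ℕ∞) (w i))
    (hs : ∀ i, HasCompactSupport (w i)) :
    ∫ x, ∑ i, ∑ j, (DD j (w i) x) ^ 2 =
      ∫ x, ((∑ i, DD i (w i) x) ^ 2 + (∑ i, ∑ j, (DD j (w i) x - DD i (w j) x) ^ 2) / 2) := by
  have hI : ∀ i j k l, Integrable (fun x => DD j (w i) x * DD k (w l) x) := fun i j k l =>
    intg_mul (DD_smooth (hw i) j).continuous (DD_smooth (hw l) k).continuous (DD_supp (hs i) j)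
  have hI2 : ∀ i j, Integrable (fun x => DD i (w i) x * DD j (w j) x - DD j (w i) x * DD i (w j) x) :=
    fun i j => (hI _ _ _ _).sub (hI _ _ _ _)
  have e : ∀ x, ((∑ i, DD i (w i) x) ^ 2 + (∑ i, ∑ j, (DD j (w i) x - DD i (w j) x) ^ 2) / 2)
      = (∑ i, ∑ j, (DD j (w i) x) ^ 2) +
        ∑ i, ∑ j, (DD i (w i) x * DD j (w j) x - DD j (w i) x * DD i (w j) x) := by
    intro x; simp only [Fin.sum_univ_three]; ring
  simp_rw [e]
  rw [integral_add]
  · have : ∫ x, ∑ i, ∑ j, (DD i (w i) x * DD j (w j) x - DD j (w i) x * DD i (w j) x) = 0 := by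
      rw [integral_finsetSum _ (fun i _ => integrable_finsetSum _ (fun j _ => hI2 i j))]
      apply Finset.sum_eq_zero; intro i _
      rw [integral_finsetSum _ (fun j _ => hI2 i j)]
      apply Finset.sum_eq_zero; intro j _
      rw [integral_sub (hI _ _ _ _) (hI _ _ _ _), swap (hw i) (hw j) (hs i), sub_self]
    rw [this, add_zero]
  · simp_rw [pow_two]
    exact integrable_finsetSum _ (fun i _ => integrable_finsetSum _ (fun j _ => hI _ _ _ _))
  · exact integrable_finsetSum _ (fun i _ => integrable_finsetSum _ (fun j _ => hI2 i j))

lemma fderiv_norm_le (f : Sp → ℝ) (x : Sp) :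
    ‖fderiv ℝ f x‖ ^ 2 ≤ 3 * ∑ j, (DD j f x) ^ 2 := by
  have h : ‖fderiv ℝ f x‖ ≤ ∑ j, |DD j f x| := by
    apply ContinuousLinearMap.opNorm_le_bound _ (by positivity)
    intro y
    have : y = ∑ j, y j • (Pi.single j 1 : Sp) := by
      ext k; simp [Finset.sum_apply, Pi.single_apply]
    conv_lhs => rw [this]
    rw [map_sum, Finset.sum_mul]
    refine (norm_sum_le _ _).trans (Finset.sum_le_sum fun j _ => ?_)
    rw [map_smul, norm_smul, mul_comm]
    exact mul_le_mul_of_nonneg_left (norm_le_pi_norm y j) (abs_nonneg _)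
  calc ‖fderiv ℝ f x‖ ^ 2 ≤ (∑ j, |DD j f x|) ^ 2 := by gcongr
    _ ≤ 3 * ∑ j, |DD j f x| ^ 2 := by
        have := sq_sum_le_card_mul_sum_sq (s := Finset.univ) (f := fun j : Fin 3 => |DD j f x|)
        simpa using this
    _ = _ := by simp

lemma sobolev : ∃ K : ℝ, 0 < K ∧ ∀ f : Sp → ℝ, ContDiff ℝ (⊤ : ℕ∞) f → HasCompactSupport f →
    ∫ x, f x ^ 6 ≤ K * (∫ x, ∑ j, (DD j f x) ^ 2) ^ 3 := by
  obtain ⟨K0, hK0⟩ : ∃ K0 : NNReal, K0 = eLpNormLESNormFDerivOfEqInnerConst (volume : Measure Sp) ((2 : NNReal) : ℝ) := ⟨_, rfl⟩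
  refine ⟨((K0 : ℝ) ^ 2 * 3) ^ 3 + 1, by positivity, fun f hf hs => ?_⟩
  have h1 : eLpNorm f (6 : NNReal) volume ≤ K0 * eLpNorm (fderiv ℝ f) (2 : NNReal) volume := by
    rw [hK0]
    apply eLpNorm_le_eLpNorm_fderiv_of_eq_inner (volume : Measure Sp) (hf.of_le (by simp)) hs
    · norm_num
    · simp
    · simp; norm_num
  have hm1 : MemLp f (6 : NNReal) volume := hf.continuous.memLp_of_hasCompactSupport hs
  have hfc : Continuous (fderiv ℝ f) := hf.continuous_fderiv (by simp)
  have hm2 : MemLp (fderiv ℝ f) (2 : NNReal) volume :=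
    hfc.memLp_of_hasCompactSupport (hs.fderiv (𝕜 := ℝ))
  rw [hm1.eLpNorm_eq_integral_rpow_norm (by simp) (by simp),
    hm2.eLpNorm_eq_integral_rpow_norm (by simp) (by simp)] at h1
  have e6 : ∫ x, ‖f x‖ ^ ((6 : NNReal) : ENNReal).toReal = ∫ x, f x ^ 6 := by
    congr 1; ext x
    have : ((6 : NNReal) : ENNReal).toReal = ((6:ℕ):ℝ) := by simp
    rw [this, Real.rpow_natCast, Real.norm_eq_abs]
    exact Even.pow_abs (by decide) _
  have e2 : ∫ x, ‖fderiv ℝ f x‖ ^ ((2 : NNReal) : ENNReal).toReal = ∫ x, ‖fderiv ℝ f x‖ ^ 2 := by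
    congr 1; ext x
    have : ((2 : NNReal) : ENNReal).toReal = ((2:ℕ):ℝ) := by simp
    rw [this, Real.rpow_natCast]
  rw [e6, e2] at h1
  set A := ∫ x, f x ^ 6
  set B := ∫ x, ‖fderiv ℝ f x‖ ^ 2
  have hA : 0 ≤ A := integral_nonneg fun x => by positivity
  have hB : 0 ≤ B := integral_nonneg fun x => by positivity
  have h2 : A ^ ((1:ℝ)/6) ≤ K0 * B ^ ((1:ℝ)/2) := by
    rw [← ENNReal.ofReal_coe_nnreal (p := K0), ← ENNReal.ofReal_mul (by positivity)] at h1
    have := (ENNReal.ofReal_le_ofReal_iff (by positivity)).1 h1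
    simpa [one_div] using this
  have h3 : A ≤ ((K0:ℝ) ^ 2 * B) ^ 3 := by
    have h4 : (A ^ ((1:ℝ)/6)) ^ 6 ≤ (K0 * B ^ ((1:ℝ)/2)) ^ 6 := by gcongr
    have a6 : (A ^ ((1:ℝ)/6)) ^ 6 = A := by
      rw [← Real.rpow_natCast, ← Real.rpow_mul hA]; norm_num
    have b2 : (B ^ ((1:ℝ)/2)) ^ 2 = B := by
      rw [← Real.rpow_natCast, ← Real.rpow_mul hB]; norm_num
    calc A = _ := a6.symm
      _ ≤ _ := h4
      _ = ((K0:ℝ) ^ 2 * (B ^ ((1:ℝ)/2)) ^ 2) ^ 3 := by ring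
      _ = _ := by rw [b2]
  have hc : Continuous (fun x => ∑ j, (DD j f x) ^ 2) :=
    continuous_finsetSum _ fun j _ => (DD_smooth hf j).continuous.pow 2
  have hIn : Integrable (fun x => ∑ j, (DD j f x) ^ 2) := by
    simp_rw [pow_two]
    exact integrable_finsetSum _ fun j _ =>
      intg_mul (DD_smooth hf j).continuous (DD_smooth hf j).continuous (DD_supp hs j)
  have h5 : B ≤ 3 * ∫ x, ∑ j, (DD j f x) ^ 2 := by
    rw [← integral_const_mul]
    apply integral_mono_of_nonneg
    · exact Filter.Eventually.of_forall fun x => by positivity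
    · exact hIn.const_mul 3
    · exact Filter.Eventually.of_forall fun x => fderiv_norm_le f x
  have hI0 : 0 ≤ ∫ x, ∑ j, (DD j f x) ^ 2 := integral_nonneg fun x => by positivity
  calc A ≤ ((K0:ℝ) ^ 2 * B) ^ 3 := h3
    _ ≤ ((K0:ℝ) ^ 2 * (3 * ∫ x, ∑ j, (DD j f x) ^ 2)) ^ 3 := by gcongr
    _ = ((K0:ℝ) ^ 2 * 3) ^ 3 * (∫ x, ∑ j, (DD j f x) ^ 2) ^ 3 := by ring
    _ ≤ _ := by
      have : 0 ≤ (∫ x, ∑ j, (DD j f x) ^ 2) ^ 3 := by positivity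
      nlinarith

lemma cutoff (δ : ℝ) (hδ0 : 0 < δ) (hδ : δ < 1/2) : ∃ M : ℝ, 0 ≤ M ∧ ∀ t : ℝ, 0 < t →
    ∃ χ : Sp → ℝ, ContDiff ℝ (⊤ : ℕ∞) χ ∧ (∀ x, 0 ≤ χ x ∧ χ x ≤ 1) ∧
      (∀ x, rad x ∉ Set.Icc ((1 - δ) * t) ((1 + δ) * t) → χ x = 1) ∧
      (∀ x, χ x ≠ 0 → δ / 2 * t ^ 2 ≤ |t ^ 2 - rad x ^ 2|) ∧
      (∀ x j, (t * fderiv ℝ χ x (Pi.single j 1)) ^ 2 ≤ M) := by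
  let b : ContDiffBump (1 : ℝ) := ⟨δ / 2, δ, by positivity, by linarith⟩
  have hbs : ContDiff ℝ (⊤ : ℕ∞) b := b.contDiff
  have hcont : Continuous (fun s : ℝ => (deriv b s) ^ 2 * s) := by
    have := hbs.continuous_deriv (by simp)
    fun_prop
  have hcs : HasCompactSupport (fun s : ℝ => (deriv b s) ^ 2 * s) := by
    have h : HasCompactSupport (deriv b) := b.hasCompactSupport.deriv
    simp_rw [pow_two, mul_assoc]
    exact h.mul_right
  obtain ⟨M, hM⟩ := hcs.exists_bound_of_continuous hcont
  have hM0 : 0 ≤ M := (norm_nonneg _).trans (hM 0)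
  refine ⟨4 * M, by positivity, fun t ht => ?_⟩
  have hr : ∀ x : Sp, ∑ i, (x i) ^ 2 = rad x ^ 2 := fun x => by
    rw [rad, Real.sq_sqrt (by positivity)]
  have hr0 : ∀ x : Sp, 0 ≤ rad x := fun x => Real.sqrt_nonneg _
  have hq : ContDiff ℝ (⊤ : ℕ∞) (fun x : Sp => (∑ i, (x i) ^ 2) / t ^ 2) := by fun_prop
  refine ⟨fun x => 1 - b ((∑ i, (x i) ^ 2) / t ^ 2), ?_, ?_, ?_, ?_, ?_⟩
  · exact contDiff_const.sub (hbs.comp hq)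
  · intro x
    exact ⟨by linarith [b.le_one (x := (∑ i, (x i) ^ 2) / t ^ 2)],
      by linarith [b.nonneg (x := (∑ i, (x i) ^ 2) / t ^ 2)]⟩
  · intro x hx
    have : b ((∑ i, (x i) ^ 2) / t ^ 2) = 0 := by
      apply b.zero_of_le_dist
      show δ ≤ _
      rw [Real.dist_eq, hr]
      have h0 := hr0 x
      rw [Set.mem_Icc, not_and_or, not_le, not_le] at hx
      have e : rad x ^ 2 / t ^ 2 - 1 = (rad x ^ 2 - t ^ 2) / t ^ 2 := by field_simp
      rw [e, abs_div, abs_of_pos (show 0 < t ^ 2 by positivity), le_div_iff₀ (by positivity)]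
      rcases hx with hx | hx
      · have h1 : rad x ^ 2 ≤ ((1 - δ) * t) ^ 2 := by gcongr
        have := neg_le_abs (rad x ^ 2 - t ^ 2)
        nlinarith [mul_pos (mul_pos ht ht) hδ0]
      · have h1 : ((1 + δ) * t) ^ 2 ≤ rad x ^ 2 := by gcongr
        have := le_abs_self (rad x ^ 2 - t ^ 2)
        nlinarith [mul_pos (mul_pos ht ht) hδ0]
    show 1 - _ = 1
    rw [this, sub_zero]
  · intro x hx
    by_contra hlt
    push Not at hlt
    apply hx
    have : b ((∑ i, (x i) ^ 2) / t ^ 2) = 1 := by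
      apply b.one_of_mem_closedBall
      show dist _ _ ≤ δ / 2
      rw [Real.dist_eq, hr]
      have e : rad x ^ 2 / t ^ 2 - 1 = (rad x ^ 2 - t ^ 2) / t ^ 2 := by field_simp
      rw [e, abs_div, abs_of_pos (show 0 < t ^ 2 by positivity), div_le_iff₀ (by positivity),
        abs_sub_comm]
      exact hlt.le
    show 1 - _ = 0
    rw [this, sub_self]
  · intro x j
    have hbd : HasDerivAt b (deriv b ((∑ i, (x i) ^ 2) / t ^ 2)) ((∑ i, (x i) ^ 2) / t ^ 2) :=
      (hbs.differentiable (by simp) _).hasDerivAt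
    have hqd : HasFDerivAt (fun x : Sp => (∑ i, (x i) ^ 2) / t ^ 2)
        ((t ^ 2)⁻¹ • ∑ i, (2 * x i) • (ContinuousLinearMap.proj i : Sp →L[ℝ] ℝ)) x := by
      have h1 : HasFDerivAt (fun x : Sp => ∑ i, (x i) ^ 2)
        (∑ i, (2 * x i) • (ContinuousLinearMap.proj i : Sp →L[ℝ] ℝ)) x := by
        apply HasFDerivAt.fun_sum
        intro i _
        have := ((ContinuousLinearMap.proj i : Sp →L[ℝ] ℝ).hasFDerivAt (x := x)).pow 2
        simpa using this
      have h2 := h1.const_mul ((t ^ 2)⁻¹)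
      simpa [div_eq_inv_mul] using h2
    have hf := (hbd.comp_hasFDerivAt x hqd).const_sub 1
    have hf' : fderiv ℝ (fun x : Sp => 1 - b ((∑ i, (x i) ^ 2) / t ^ 2)) x (Pi.single j 1) =
        -(deriv b ((∑ i, (x i) ^ 2) / t ^ 2) * ((t ^ 2)⁻¹ * (2 * x j))) := by
      have := hf.fderiv
      simp only [Function.comp_def] at this
      rw [this]
      simp [Pi.single_apply]
    rw [hf']
    have hb := hM ((∑ i, (x i) ^ 2) / t ^ 2)
    set s := (∑ i, (x i) ^ 2) / t ^ 2 with hs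
    have hxs : (x j) ^ 2 / t ^ 2 ≤ s := by
      rw [hs]; gcongr
      exact Finset.single_le_sum (f := fun i => (x i) ^ 2) (fun i _ => by positivity) (Finset.mem_univ j)
    calc _ = 4 * (deriv b s ^ 2 * ((x j) ^ 2 / t ^ 2)) := by field_simp; ring
      _ ≤ 4 * (deriv b s ^ 2 * s) := by gcongr
      _ ≤ 4 * M := by
        have := (le_abs_self _).trans hb
        linarith

lemma abs_sum_le_card {n : ℕ} (f : Fin n → ℝ) (c : ℝ) (h : ∀ i, |f i| ≤ c) :
    |∑ i, f i| ≤ n * c := by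
  refine (Finset.abs_sum_le_sum_abs _ _).trans ((Finset.sum_le_sum fun i _ => h i).trans ?_)
  simp

/-- pointwise algebra -/
lemma ptwise (t r K σ B : ℝ) (x : Fin 3 → ℝ) (u : Fin 4 → Fin 4 → ℝ)
    (ht : 0 < t) (hr : 0 ≤ r) (hrr : ∑ i, x i ^ 2 = r ^ 2) (hK : 0 ≤ K)
    (hcone : (t + r) ^ 2 ≤ K * |t ^ 2 - r ^ 2|)
    (hsym : ∀ a b, u a b = u b a)
    (hS : ∀ a, |t * u 0 a + ∑ j : Fin 3, x j * u j.succ a| ≤ σ)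
    (hO : ∀ (i j : Fin 3) a, |x i * u j.succ a - x j * u i.succ a| ≤ σ)
    (hB : B = u 0 0 - ∑ j : Fin 3, u j.succ j.succ)
    (hBσ : (t + r) * |B| ≤ σ) :
    |t * ∑ j : Fin 3, u j.succ j.succ| ≤ 14 * K * σ ∧
    ∀ j : Fin 3, |t * u j.succ 0| ≤ (14 * K + 4) * σ := by
  have hσ : 0 ≤ σ := (abs_nonneg _).trans (hS 0)
  have hx : ∀ j, |x j| ≤ r := fun j => by
    apply abs_le_of_sq_le_sq _ hr
    rw [← hrr]
    exact Finset.single_le_sum (f := fun i => (x i) ^ 2) (fun i _ => by positivity) (Finset.mem_univ j)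
  set L := ∑ j : Fin 3, u j.succ j.succ with hL
  have id1 : (t ^ 2 - r ^ 2) * L = t * (t * u 0 0 + ∑ j : Fin 3, x j * u j.succ 0)
      - ∑ k : Fin 3, x k * (t * u 0 k.succ + ∑ j : Fin 3, x j * u j.succ k.succ)
      + (∑ i : Fin 3, ∑ j : Fin 3, x i * (x j * u i.succ j.succ - x i * u j.succ j.succ)) - t ^ 2 * B := by
    rw [hB, ← hrr, hL]
    simp only [Fin.sum_univ_three]
    rw [hsym 0 (Fin.succ 0), hsym 0 (Fin.succ 1), hsym 0 (Fin.succ 2),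
      hsym (Fin.succ 1) (Fin.succ 0), hsym (Fin.succ 2) (Fin.succ 0), hsym (Fin.succ 2) (Fin.succ 1)]
    ring
  have b1 : |t * (t * u 0 0 + ∑ j : Fin 3, x j * u j.succ 0)| ≤ t * σ := by
    rw [abs_mul, abs_of_pos ht]; gcongr; exact hS 0
  have b2 : |∑ k : Fin 3, x k * (t * u 0 k.succ + ∑ j : Fin 3, x j * u j.succ k.succ)|
      ≤ (3 : ℕ) * (r * σ) := by
    apply abs_sum_le_card; intro k
    rw [abs_mul]; exact mul_le_mul (hx k) (hS _) (abs_nonneg _) hr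
  have b3 : |∑ i : Fin 3, ∑ j : Fin 3, x i * (x j * u i.succ j.succ - x i * u j.succ j.succ)|
      ≤ (3 : ℕ) * ((3 : ℕ) * (r * σ)) := by
    apply abs_sum_le_card; intro k
    apply abs_sum_le_card; intro l
    rw [abs_mul]; exact mul_le_mul (hx k) (hO _ _ _) (abs_nonneg _) hr
  have b4 : |t ^ 2 * B| ≤ (t + r) * σ := by
    rw [abs_mul, abs_of_pos (show 0 < t ^ 2 by positivity)]
    calc t ^ 2 * |B| ≤ (t + r) ^ 2 * |B| := by gcongr; linarith
      _ = (t + r) * ((t + r) * |B|) := by ring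
      _ ≤ _ := by gcongr
  have b5 : |t ^ 2 - r ^ 2| * |L| ≤ 14 * (t + r) * σ := by
    rw [← abs_mul, id1]
    have hrσ : 0 ≤ r * σ := by positivity
    have htσ : 0 ≤ t * σ := by positivity
    push_cast at b2 b3
    rw [abs_le] at *
    constructor <;> nlinarith
  have b6 : (t + r) * |L| ≤ 14 * K * σ := by
    have : (t + r) * ((t + r) * |L|) ≤ (t + r) * (14 * K * σ) := by
      calc (t + r) * ((t + r) * |L|) = (t + r) ^ 2 * |L| := by ring
        _ ≤ (K * |t ^ 2 - r ^ 2|) * |L| := by gcongr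
        _ = K * (|t ^ 2 - r ^ 2| * |L|) := by ring
        _ ≤ K * (14 * (t + r) * σ) := by gcongr
        _ = _ := by ring
    exact le_of_mul_le_mul_left this (by positivity)
  constructor
  · rw [abs_mul, abs_of_pos ht]
    refine le_trans ?_ b6
    gcongr; linarith
  · intro j
    have id2 : t * u j.succ 0 = (t * u 0 j.succ + ∑ i : Fin 3, x i * u i.succ j.succ) - x j * L
        - ∑ i : Fin 3, (x i * u j.succ i.succ - x j * u i.succ i.succ) := by
      rw [hsym j.succ 0, hL, Finset.sum_sub_distrib, Finset.mul_sum]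
      simp_rw [hsym j.succ _]
      have : ∀ i : Fin 3, u j.succ i.succ = u i.succ j.succ := fun i => hsym _ _
      ring
    have c1 : |x j * L| ≤ 14 * K * σ := by
      rw [abs_mul]
      refine le_trans ?_ b6
      gcongr
      linarith [hx j]
    have c2 : |∑ i : Fin 3, (x i * u j.succ i.succ - x j * u i.succ i.succ)| ≤ (3:ℕ) * σ := by
      apply abs_sum_le_card; intro i; exact hO _ _ _
    have c3 := hS j.succ
    rw [id2]
    push_cast at c2
    rw [abs_le] at *
    constructor <;> linarith

lemma cons_smooth (t : ℝ) : ContDiff ℝ (⊤ : ℕ∞) (fun x : Sp => (Fin.cons t x : Pt)) := by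
  rw [contDiff_pi]
  intro i
  refine Fin.cases ?_ (fun j => ?_) i
  · simpa using contDiff_const
  · simpa using contDiff_apply ℝ ℝ j

lemma cons_closed (t : ℝ) : Topology.IsClosedEmbedding (fun x : Sp => (Fin.cons t x : Pt)) := by
  apply Function.LeftInverse.isClosedEmbedding (f := fun X : Pt => (fun j : Fin 3 => X j.succ))
  · intro x; ext j; simp
  · fun_prop
  · exact (cons_smooth t).continuous

lemma slice_smooth {u : Pt → ℝ} (hu : ContDiff ℝ (⊤ : ℕ∞) u) (t : ℝ) :
    ContDiff ℝ (⊤ : ℕ∞) (fun x : Sp => u (Fin.cons t x : Pt)) := hu.comp (cons_smooth t)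

lemma slice_supp {u : Pt → ℝ} (hu : HasCompactSupport u) (t : ℝ) :
    HasCompactSupport (fun x : Sp => u (Fin.cons t x : Pt)) :=
  hu.comp_isClosedEmbedding (cons_closed t)

lemma DD_slice {u : Pt → ℝ} (hu : ContDiff ℝ (⊤ : ℕ∞) u) (t : ℝ) (j : Fin 3) (x : Sp) :
    DD j (fun x : Sp => u (Fin.cons t x : Pt)) x = pd j.succ u (Fin.cons t x) := by
  unfold DD pd
  have h1 : HasFDerivAt (fun x : Sp => (Fin.cons t x : Pt))
      (ContinuousLinearMap.pi (Fin.cons 0 (fun j => ContinuousLinearMap.proj j)) : Sp →L[ℝ] Pt) x := by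
    rw [hasFDerivAt_pi']
    intro i
    refine Fin.cases ?_ (fun j => ?_) i
    · simp only [Fin.cons_zero]
      exact (hasFDerivAt_const t x).congr_fderiv (by ext y; rfl)
    · simp only [Fin.cons_succ]
      exact ((ContinuousLinearMap.proj j : Sp →L[ℝ] ℝ).hasFDerivAt (x := x)).congr_fderiv (by ext y; rfl)
  have h2 := ((hu.differentiable (by simp) (Fin.cons t x : Pt)).hasFDerivAt.comp x h1).fderiv
  simp only [Function.comp_def] at h2
  rw [h2, ContinuousLinearMap.comp_apply]
  congr 1
  ext i
  refine Fin.cases ?_ (fun k => ?_) i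
  · simp
  · simp [Pi.single_apply]

lemma DD_mul {f g : Sp → ℝ} (hf : ContDiff ℝ (⊤ : ℕ∞) f) (hg : ContDiff ℝ (⊤ : ℕ∞) g)
    (j : Fin 3) (x : Sp) :
    DD j (fun x => f x * g x) x = DD j f x * g x + f x * DD j g x := by
  unfold DD
  rw [fderiv_fun_mul (hf.differentiable (by simp) x) (hg.differentiable (by simp) x)]
  simp
  ring

lemma rad_cont : Continuous rad := by unfold rad; fun_prop
lemma jb_cont : Continuous jb := by unfold jb; fun_prop

lemma Gam_cs {u : Pt → ℝ} (hu : ContDiff ℝ (⊤ : ℕ∞) u) (hs : HasCompactSupport u) (k : Fin 8) :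
    Continuous (Gam k u) ∧ HasCompactSupport (Gam k u) := by
  have hp : ∀ a, Continuous (pd a u) := fun a => (pd_smooth hu a).continuous
  have hr : ∀ i j, Continuous (rot i j u) ∧ HasCompactSupport (rot i j u) := by
    intro i j
    refine ⟨?_, ?_⟩
    · unfold rot; have := hp i; have := hp j; fun_prop
    · unfold rot
      have h1 : HasCompactSupport (fun X : Pt => X i * pd j u X) := (pd_supp hs j).mul_left
      have h2 : HasCompactSupport (fun X : Pt => X j * pd i u X) := (pd_supp hs i).mul_left
      exact h1.sub h2
  have hsc : Continuous (scal u) ∧ HasCompactSupport (scal u) := by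
    refine ⟨?_, ?_⟩
    · unfold scal
      exact continuous_finsetSum _ fun a _ => (continuous_apply a).mul (hp a)
    · unfold scal
      simp only [Fin.sum_univ_four]
      have h1 : ∀ i, HasCompactSupport (fun X : Pt => X i * pd i u X) := fun i => (pd_supp hs i).mul_left
      exact (((h1 0).add (h1 1)).add (h1 2)).add (h1 3)
  fin_cases k
  · exact ⟨hp 0, pd_supp hs 0⟩
  · exact ⟨hp 1, pd_supp hs 1⟩
  · exact ⟨hp 2, pd_supp hs 2⟩
  · exact ⟨hp 3, pd_supp hs 3⟩
  · exact hr 1 2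
  · exact hr 1 3
  · exact hr 2 3
  · exact hsc

lemma box_cs {u : Pt → ℝ} (hu : ContDiff ℝ (⊤ : ℕ∞) u) (hs : HasCompactSupport u) :
    Continuous (box1 u) ∧ HasCompactSupport (box1 u) := by
  have hp : ∀ a, Continuous (pd a (pd a u)) := fun a => (pd_smooth (pd_smooth hu a) a).continuous
  have hq : ∀ a, HasCompactSupport (pd a (pd a u)) := fun a => pd_supp (pd_supp hs a) a
  unfold box1
  refine ⟨(hp 0).sub (continuous_finsetSum _ fun j _ => hp _), ?_⟩
  simp only [Fin.sum_univ_three]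
  exact (hq _).sub (((hq _).add (hq _)).add (hq _))

lemma slice_sq_intg {u : Pt → ℝ} (hu : Continuous u ∧ HasCompactSupport u) (t : ℝ) :
    Integrable (fun x : Sp => (u (Fin.cons t x : Pt)) ^ 2) := by
  simp_rw [pow_two]
  have hc := hu.1.comp (cons_smooth t).continuous
  exact intg_mul hc hc (slice_supp hu.2 t)

lemma rhs_eq (h : Pt → ℝ) (t : ℝ) :
    ∑ m ∈ Finset.range 2, ∑ α : Fin m → Fin 8,
      (∫ x : Sp, ∑ a, (GamComp α (pd a h) (Fin.cons t x)) ^ 2) ^ ((1:ℝ)/2)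
    = (∫ x : Sp, ∑ a, (pd a h (Fin.cons t x)) ^ 2) ^ ((1:ℝ)/2) +
      ∑ k : Fin 8, (∫ x : Sp, ∑ a, (Gam k (pd a h) (Fin.cons t x)) ^ 2) ^ ((1:ℝ)/2) := by
  rw [Finset.sum_range_succ, Finset.sum_range_one]
  congr 1
  · rw [Fintype.sum_unique]
    rfl

/-- The pointwise controlling density. -/
def qq (h : Pt → ℝ) (t : ℝ) (x : Sp) : ℝ :=
  ∑ a, (pd a h (Fin.cons t x)) ^ 2 + ∑ k : Fin 8, ∑ a, (Gam k (pd a h) (Fin.cons t x)) ^ 2 +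
    jb (t + rad x) ^ 2 * (box1 h (Fin.cons t x)) ^ 2

lemma qq_intg {h : Pt → ℝ} (hh : ContDiff ℝ (⊤ : ℕ∞) h) (hs : HasCompactSupport h) (t : ℝ) :
    Integrable (qq h t) ∧ ∫ x, qq h t x ≤
      ((∑ m ∈ Finset.range 2, ∑ α : Fin m → Fin 8,
                    (∫ x : Sp, ∑ a, (GamComp α (pd a h) (Fin.cons t x)) ^ 2) ^ ((1:ℝ)/2)
                  + (∫ x : Sp,
                      jb (t + rad x) ^ 2 * (box1 h (Fin.cons t x)) ^ 2) ^ ((1:ℝ)/2))) ^ 2 := by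
  have i1 : Integrable (fun x : Sp => ∑ a, (pd a h (Fin.cons t x : Pt)) ^ 2) :=
    integrable_finsetSum _ fun a _ =>
      slice_sq_intg ⟨(pd_smooth hh a).continuous, pd_supp hs a⟩ t
  have i2 : ∀ k, Integrable (fun x : Sp => ∑ a, (Gam k (pd a h) (Fin.cons t x : Pt)) ^ 2) :=
    fun k => integrable_finsetSum _ fun a _ => slice_sq_intg (Gam_cs (pd_smooth hh a) (pd_supp hs a) k) t
  have i2' : Integrable (fun x : Sp => ∑ k : Fin 8, ∑ a, (Gam k (pd a h) (Fin.cons t x : Pt)) ^ 2) :=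
    integrable_finsetSum _ fun k _ => i2 k
  have i3 : Integrable (fun x : Sp => jb (t + rad x) ^ 2 * (box1 h (Fin.cons t x : Pt)) ^ 2) := by
    have hb := box_cs hh hs
    have hc : Continuous fun x : Sp => box1 h (Fin.cons t x : Pt) :=
      hb.1.comp (cons_smooth t).continuous
    have hj : Continuous fun x : Sp => jb (t + rad x) :=
      jb_cont.comp (continuous_const.add rad_cont)
    apply ((hj.pow 2).mul (hc.pow 2)).integrable_of_hasCompactSupport
    have : HasCompactSupport (fun x : Sp => (box1 h (Fin.cons t x : Pt)) ^ 2) := by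
      simp_rw [pow_two]; exact (slice_supp hb.2 t).mul_right
    exact this.mul_left
  refine ⟨(i1.add i2').add i3, ?_⟩
  rw [rhs_eq]
  unfold qq
  have i12 : Integrable (fun x : Sp => ∑ a, (pd a h (Fin.cons t x : Pt)) ^ 2 +
      ∑ k : Fin 8, ∑ a, (Gam k (pd a h) (Fin.cons t x : Pt)) ^ 2) := i1.add i2'
  rw [integral_add i12 i3, integral_add i1 i2', integral_finsetSum _ fun k _ => i2 k]
  have sq : ∀ A : ℝ, 0 ≤ A → A = A ^ ((1:ℝ)/2) * A ^ ((1:ℝ)/2) := fun A hA => by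
    rw [← Real.sqrt_eq_rpow, Real.mul_self_sqrt hA]
  set I1 := ∫ x : Sp, ∑ a, (pd a h (Fin.cons t x)) ^ 2 with hI1
  set I2 : Fin 8 → ℝ := fun k => ∫ x : Sp, ∑ a, (Gam k (pd a h) (Fin.cons t x)) ^ 2 with hI2
  set I3 := ∫ x : Sp, jb (t + rad x) ^ 2 * (box1 h (Fin.cons t x)) ^ 2 with hI3
  have p1 : 0 ≤ I1 := integral_nonneg fun x => by positivity
  have p2 : ∀ k, 0 ≤ I2 k := fun k => integral_nonneg fun x => by positivity
  have p3 : 0 ≤ I3 := integral_nonneg fun x => by positivity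
  show I1 + ∑ k, I2 k + I3 ≤ (I1 ^ ((1:ℝ)/2) + ∑ k, I2 k ^ ((1:ℝ)/2) + I3 ^ ((1:ℝ)/2)) ^ 2
  have s1 := sq I1 p1
  have s3 := sq I3 p3
  have n1 : 0 ≤ I1 ^ ((1:ℝ)/2) := by positivity
  have n3 : 0 ≤ I3 ^ ((1:ℝ)/2) := by positivity
  have n2 : ∀ k, 0 ≤ I2 k ^ ((1:ℝ)/2) := fun k => Real.rpow_nonneg (p2 k) _
  have s2 : ∑ k, I2 k ≤ (∑ k, I2 k ^ ((1:ℝ)/2)) * (∑ k, I2 k ^ ((1:ℝ)/2)) := by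
    rw [Finset.sum_mul]
    apply Finset.sum_le_sum
    intro k _
    calc I2 k = I2 k ^ ((1:ℝ)/2) * I2 k ^ ((1:ℝ)/2) := sq (I2 k) (p2 k)
      _ ≤ _ := mul_le_mul_of_nonneg_left (Finset.single_le_sum (f := fun k => I2 k ^ ((1:ℝ)/2))
        (fun k _ => n2 k) (Finset.mem_univ k)) (n2 k)
  have n2' : 0 ≤ ∑ k, I2 k ^ ((1:ℝ)/2) := Finset.sum_nonneg fun k _ => n2 k
  nlinarith [mul_nonneg n1 n2', mul_nonneg n1 n3, mul_nonneg n2' n3]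

lemma qq_v (h : Pt → ℝ) (t : ℝ) (x : Sp) (a : Fin 4) :
    (pd a h (Fin.cons t x)) ^ 2 ≤ qq h t x := by
  have h1 := Finset.single_le_sum (f := fun a => (pd a h (Fin.cons t x)) ^ 2)
    (fun i _ => by positivity) (Finset.mem_univ a)
  have h2 : 0 ≤ ∑ k : Fin 8, ∑ a, (Gam k (pd a h) (Fin.cons t x)) ^ 2 := by positivity
  have h3 : 0 ≤ jb (t + rad x) ^ 2 * (box1 h (Fin.cons t x)) ^ 2 := by positivity
  unfold qq
  linarith

lemma qq_G (h : Pt → ℝ) (t : ℝ) (x : Sp) (k : Fin 8) (a : Fin 4) :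
    (Gam k (pd a h) (Fin.cons t x)) ^ 2 ≤ qq h t x := by
  have h1 := Finset.single_le_sum (f := fun a => (Gam k (pd a h) (Fin.cons t x)) ^ 2)
    (fun i _ => by positivity) (Finset.mem_univ a)
  have h2 := Finset.single_le_sum (f := fun k : Fin 8 => ∑ a, (Gam k (pd a h) (Fin.cons t x)) ^ 2)
    (fun i _ => by positivity) (Finset.mem_univ k)
  have h0 : 0 ≤ ∑ a, (pd a h (Fin.cons t x)) ^ 2 := by positivity
  have h3 : 0 ≤ jb (t + rad x) ^ 2 * (box1 h (Fin.cons t x)) ^ 2 := by positivity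
  unfold qq
  linarith

lemma qq_B (h : Pt → ℝ) (t : ℝ) (x : Sp) :
    ((t + rad x) * |box1 h (Fin.cons t x)|) ^ 2 ≤ qq h t x := by
  have h0 : 0 ≤ ∑ a, (pd a h (Fin.cons t x)) ^ 2 := by positivity
  have h2 : 0 ≤ ∑ k : Fin 8, ∑ a, (Gam k (pd a h) (Fin.cons t x)) ^ 2 := by positivity
  have h3 : (t + rad x) ^ 2 ≤ jb (t + rad x) ^ 2 := by
    unfold jb; rw [Real.sq_sqrt (by positivity)]; linarith
  have h4 := mul_le_mul_of_nonneg_right h3 (sq_nonneg (box1 h (Fin.cons t x)))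
  unfold qq
  rw [mul_pow, sq_abs]
  linarith

/-- Pointwise estimates on the cutoff region. -/
lemma ptw_h {h : Pt → ℝ} (hh : ContDiff ℝ (⊤ : ℕ∞) h) (t : ℝ) (ht : 0 < t) (δ : ℝ) (hδ : 0 < δ)
    (x : Sp) (hx : δ / 2 * t ^ 2 ≤ |t ^ 2 - rad x ^ 2|) :
    |t * ∑ j : Fin 3, pd j.succ (pd j.succ h) (Fin.cons t x)| ≤
        14 * (8 / δ + 2) * √(qq h t x) ∧
    ∀ j : Fin 3, |t * pd j.succ (pd 0 h) (Fin.cons t x)| ≤ (14 * (8 / δ + 2) + 4) * √(qq h t x) := by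
  have hr0 : 0 ≤ rad x := Real.sqrt_nonneg _
  have hg : ∀ k a, |Gam k (pd a h) (Fin.cons t x)| ≤ √(qq h t x) := fun k a =>
    Real.abs_le_sqrt (qq_G h t x k a)
  refine ptwise t (rad x) (8 / δ + 2) (√(qq h t x)) (box1 h (Fin.cons t x)) x
    (fun a b => pd a (pd b h) (Fin.cons t x)) ht hr0 ?_ (by positivity) ?_
    (fun a b => pd_comm hh a b _) ?_ ?_ rfl ?_
  · rw [rad, Real.sq_sqrt (by positivity)]
  · have h1 : rad x ^ 2 ≤ t ^ 2 + |t ^ 2 - rad x ^ 2| := by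
      have := neg_abs_le (t ^ 2 - rad x ^ 2); linarith
    have h2 : 4 * t ^ 2 ≤ 8 / δ * |t ^ 2 - rad x ^ 2| := by
      calc 4 * t ^ 2 = 8 / δ * (δ / 2 * t ^ 2) := by field_simp; norm_num
        _ ≤ _ := by gcongr
    nlinarith [sq_nonneg (t - rad x)]
  · intro a
    have := hg 7 a
    have e : Gam 7 (pd a h) (Fin.cons t x) = t * pd 0 (pd a h) (Fin.cons t x) +
        ∑ j : Fin 3, x j * pd j.succ (pd a h) (Fin.cons t x) := by
      show scal (pd a h) (Fin.cons t x) = _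
      unfold scal
      rw [Fin.sum_univ_succ]
      simp
    rwa [e] at this
  · intro i j a
    have h4 : |x 0 * pd 2 (pd a h) (Fin.cons t x) - x 1 * pd 1 (pd a h) (Fin.cons t x)| ≤ √(qq h t x) :=
      hg 4 a
    have h5 : |x 0 * pd 3 (pd a h) (Fin.cons t x) - x 2 * pd 1 (pd a h) (Fin.cons t x)| ≤ √(qq h t x) :=
      hg 5 a
    have h6 : |x 1 * pd 3 (pd a h) (Fin.cons t x) - x 2 * pd 2 (pd a h) (Fin.cons t x)| ≤ √(qq h t x) :=
      hg 6 a
    have hz := Real.sqrt_nonneg (qq h t x)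
    fin_cases i <;> fin_cases j
    · simp
    · exact h4
    · exact h5
    · rw [abs_sub_comm]; exact h4
    · simp
    · exact h6
    · rw [abs_sub_comm]; exact h5
    · rw [abs_sub_comm]; exact h6
    · simp
  · exact Real.le_sqrt_of_sq_le (qq_B h t x)

/-- From the weighted pointwise bounds to the `H¹` bound of the truncated gradient. -/
lemma grad_bound (w : Fin 4 → Sp → ℝ) (hw : ∀ a, ContDiff ℝ (⊤ : ℕ∞) (w a))
    (hs : ∀ a, HasCompactSupport (w a)) (q : Sp → ℝ) (hq : Integrable q)
    (h0 : ∀ x j, (DD j (w 0) x) ^ 2 ≤ q x)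
    (h1 : ∀ x, (∑ i : Fin 3, DD i (w i.succ) x) ^ 2 ≤ q x)
    (h2 : ∀ x (i j : Fin 3), (DD j (w i.succ) x - DD i (w j.succ) x) ^ 2 ≤ q x) (a : Fin 4) :
    ∫ x, ∑ j, (DD j (w a) x) ^ 2 ≤ 6 * ∫ x, q x := by
  have q0 : ∀ x, 0 ≤ q x := fun x => (sq_nonneg _).trans (h1 x)
  rw [← integral_const_mul]
  have hI : ∀ a j, Integrable (fun x => (DD j (w a) x) ^ 2) := fun a j => by
    simp_rw [pow_two]
    exact intg_mul (DD_smooth (hw a) j).continuous (DD_smooth (hw a) j).continuous (DD_supp (hs a) j)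
  refine Fin.cases ?_ (fun i => ?_) a
  · apply integral_mono_of_nonneg
    · exact Filter.Eventually.of_forall fun x => by positivity
    · exact hq.const_mul 6
    · refine Filter.Eventually.of_forall fun x => ?_
      have := Finset.sum_le_sum (s := Finset.univ) fun j _ => h0 x j
      simp at this
      show ∑ j, (DD j (w 0) x) ^ 2 ≤ 6 * q x
      linarith [q0 x]
  · calc ∫ x, ∑ j, (DD j (w i.succ) x) ^ 2 ≤ ∫ x, ∑ i : Fin 3, ∑ j, (DD j (w i.succ) x) ^ 2 := by
          apply integral_mono_of_nonneg
          · exact Filter.Eventually.of_forall fun x => by positivity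
          · exact integrable_finsetSum _ fun i _ => integrable_finsetSum _ fun j _ => hI _ _
          · refine Filter.Eventually.of_forall fun x => ?_
            exact Finset.single_le_sum (f := fun i : Fin 3 => ∑ j, (DD j (w i.succ) x) ^ 2)
              (fun i _ => by positivity) (Finset.mem_univ i)
      _ = _ := divcurl (fun i => w i.succ) (fun i => hw _) (fun i => hs _)
      _ ≤ _ := by
          apply integral_mono_of_nonneg
          · exact Filter.Eventually.of_forall fun x => by positivity
          · exact hq.const_mul 6
          · refine Filter.Eventually.of_forall fun x => ?_
            have e : ∑ i : Fin 3, ∑ j : Fin 3, (DD j (w i.succ) x - DD i (w j.succ) x) ^ 2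
                ≤ 9 * q x := by
              have := Finset.sum_le_sum (s := Finset.univ) fun i _ =>
                Finset.sum_le_sum (s := Finset.univ) fun j _ => h2 x i j
              simp at this
              linarith
            have := h1 x
            show (∑ i : Fin 3, DD i (w i.succ) x) ^ 2 +
              (∑ i : Fin 3, ∑ j : Fin 3, (DD j (w i.succ) x - DD i (w j.succ) x) ^ 2) / 2 ≤ 6 * q x
            linarith [q0 x]

lemma six_sum (y : Fin 4 → ℝ) : (∑ a, y a ^ 2) ^ 3 ≤ 16 * ∑ a, y a ^ 6 := by
  have key := pow_sum_div_card_le_sum_pow (s := (Finset.univ : Finset (Fin 4))) (f := fun a => y a ^ 2)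
    (fun a _ => by positivity) 2
  simp only [Finset.card_univ, Fintype.card_fin] at key
  rw [div_le_iff₀ (by positivity)] at key
  have e : ∀ a, (y a ^ 2) ^ (2 + 1) = y a ^ 6 := fun a => by ring
  simp_rw [e] at key
  norm_num at key
  linarith

/-- Final assembly. -/
lemma assemble {K : ℝ} (hK : 0 < K)
    (hsob : ∀ f : Sp → ℝ, ContDiff ℝ (⊤ : ℕ∞) f → HasCompactSupport f →
      ∫ x, f x ^ 6 ≤ K * (∫ x, ∑ j, (DD j f x) ^ 2) ^ 3)
    (v w : Fin 4 → Sp → ℝ) (hw : ∀ a, ContDiff ℝ (⊤ : ℕ∞) (w a))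
    (hs : ∀ a, HasCompactSupport (w a)) (E : Set Sp) (hE : MeasurableSet E)
    (heq : ∀ a, ∀ x ∈ E, v a x = w a x) (P : ℝ)
    (hP : ∀ a, ∫ x, ∑ j, (DD j (w a) x) ^ 2 ≤ P) :
    ∫ x in E, (∑ a, (v a x) ^ 2) ^ 3 ≤ 64 * K * P ^ 3 := by
  have hI : ∀ a, Integrable (fun x => w a x ^ 6) := fun a => by
    have e : (fun x => w a x ^ 6) = fun x => w a x * w a x ^ 5 := by ext x; ring
    rw [e]
    exact intg_mul (hw a).continuous ((hw a).continuous.pow 5) (hs a)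
  have hI' : Integrable (fun x => 16 * ∑ a, w a x ^ 6) :=
    (integrable_finsetSum _ fun a _ => hI a).const_mul 16
  have hw2 : Continuous (fun x => (∑ a, (w a x) ^ 2) ^ 3) :=
    (continuous_finsetSum _ fun a _ => (hw a).continuous.pow 2).pow 3
  have hJ : Integrable (fun x => (∑ a, (w a x) ^ 2) ^ 3) := by
    refine hI'.mono' hw2.aestronglyMeasurable (Filter.Eventually.of_forall fun x => ?_)
    rw [Real.norm_eq_abs, abs_of_nonneg (by positivity)]
    exact six_sum _
  calc ∫ x in E, (∑ a, (v a x) ^ 2) ^ 3 = ∫ x in E, (∑ a, (w a x) ^ 2) ^ 3 := by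
        apply setIntegral_congr_fun hE
        intro x hx
        simp only
        simp_rw [heq _ x hx]
    _ ≤ ∫ x, (∑ a, (w a x) ^ 2) ^ 3 :=
        setIntegral_le_integral hJ (Filter.Eventually.of_forall fun x => by positivity)
    _ ≤ ∫ x, 16 * ∑ a, w a x ^ 6 := integral_mono hJ hI' fun x => six_sum _
    _ = 16 * ∑ a, ∫ x, w a x ^ 6 := by
        rw [integral_const_mul, integral_finsetSum _ fun a _ => hI a]
    _ ≤ 16 * ∑ a : Fin 4, K * P ^ 3 := by
        gcongr with a
        refine (hsob _ (hw a) (hs a)).trans ?_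
        have : 0 ≤ ∫ x, ∑ j, (DD j (w a) x) ^ 2 := integral_nonneg fun x => by positivity
        gcongr
        exact hP a
    _ = _ := by simp; ring

lemma sq_le_of_abs {y t c q j : ℝ} (hc : 0 ≤ c) (hq : 0 ≤ q) (hj : 0 < j) (ht : j ^ 2 ≤ 2 * t ^ 2)
    (h : |t * y| ≤ c * √q) : y ^ 2 ≤ 2 * c ^ 2 / j ^ 2 * q := by
  have h1 : (t * y) ^ 2 ≤ c ^ 2 * q := by
    rw [← sq_abs]
    calc |t * y| ^ 2 ≤ (c * √q) ^ 2 := by gcongr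
      _ = c ^ 2 * q := by rw [mul_pow, Real.sq_sqrt hq]
  rw [div_mul_eq_mul_div, le_div_iff₀ (by positivity)]
  nlinarith [mul_le_mul_of_nonneg_right ht (sq_nonneg y)]

/-- inequality (3.4) of the paper.  Fix `0 < δ < 1/2`.  For
`h ∈ C₀^∞(ℝ₊×ℝ³)` and `t ≥ 0`, the `L⁶` norm of `h'(t,·)` away from the light cone,
i.e. over `{x : |x| ∉ [(1-δ)t,(1+δ)t]}`, is bounded by
`C⟨t⟩⁻¹(Σ_{|α|≤1}‖Γ^α h'(t,·)‖₂ + ‖⟨t+r⟩□h(t,·)‖₂)`. -/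
theorem stmt_10 (δ : ℝ) (hδ0 : 0 < δ) (hδ : δ < 1/2) :
    ∃ C : ℝ, 0 < C ∧
      ∀ (h : Pt → ℝ), ContDiff ℝ (⊤ : ℕ∞) h → HasCompactSupport h →
        (∀ X : Pt, X 0 < 0 → h X = 0) →
        ∀ t : ℝ, 0 ≤ t →
          (∫ x in {x : Sp | rad x ∉ Set.Icc ((1 - δ) * t) ((1 + δ) * t)},
              (∑ a, (pd a h (Fin.cons t x)) ^ 2) ^ 3) ^ ((1:ℝ)/6)
            ≤ C * (jb t)⁻¹ *
                (∑ m ∈ Finset.range 2, ∑ α : Fin m → Fin 8,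
                    (∫ x : Sp, ∑ a, (GamComp α (pd a h) (Fin.cons t x)) ^ 2) ^ ((1:ℝ)/2)
                  + (∫ x : Sp,
                      jb (t + rad x) ^ 2 * (box1 h (Fin.cons t x)) ^ 2) ^ ((1:ℝ)/2)) := by
  obtain ⟨K, hK, hsob⟩ := sobolev
  obtain ⟨M, hM, hcut⟩ := cutoff δ hδ0 hδ
  set L := 14 * (8 / δ + 2) with hL
  have hL0 : 0 ≤ L := by positivity
  set c := 3 * √M + L + 4 with hc
  have hm0 := Real.sqrt_nonneg M
  have hc0 : 4 ≤ c := by rw [hc]; linarith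
  refine ⟨(64 * K * (12 * c ^ 2) ^ 3) ^ ((1:ℝ)/6), by positivity, ?_⟩
  intro h hh hs _ t ht
  obtain ⟨hqi, hqR⟩ := qq_intg hh hs t
  set R := (∑ m ∈ Finset.range 2, ∑ α : Fin m → Fin 8,
                    (∫ x : Sp, ∑ a, (GamComp α (pd a h) (Fin.cons t x)) ^ 2) ^ ((1:ℝ)/2)
                  + (∫ x : Sp,
                      jb (t + rad x) ^ 2 * (box1 h (Fin.cons t x)) ^ 2) ^ ((1:ℝ)/2)) with hR
  have hR0 : 0 ≤ R := by
    rw [hR]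
    refine add_nonneg (Finset.sum_nonneg fun m _ => Finset.sum_nonneg fun α _ =>
      Real.rpow_nonneg (integral_nonneg fun x => by positivity) _)
      (Real.rpow_nonneg (integral_nonneg fun x => by positivity) _)
  have hj : 0 < jb t := by unfold jb; positivity
  have hj2 : jb t ^ 2 = 1 + t ^ 2 := by unfold jb; rw [Real.sq_sqrt (by positivity)]
  have hq0 : ∀ x, 0 ≤ qq h t x := fun x => (sq_nonneg _).trans (qq_v h t x 0)
  set E := {x : Sp | rad x ∉ Set.Icc ((1 - δ) * t) ((1 + δ) * t)} with hE
  have hEm : MeasurableSet E := (rad_cont.measurable measurableSet_Icc).compl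
  let v : Fin 4 → Sp → ℝ := fun a x => pd a h (Fin.cons t x)
  have hv : ∀ a, ContDiff ℝ (⊤ : ℕ∞) (v a) := fun a => slice_smooth (pd_smooth hh a) t
  have hvs : ∀ a, HasCompactSupport (v a) := fun a => slice_supp (pd_supp hs a) t
  have hDv : ∀ a j x, DD j (v a) x = pd j.succ (pd a h) (Fin.cons t x) := fun a j x =>
    DD_slice (pd_smooth hh a) t j x
  have hvq : ∀ a x, |v a x| ≤ √(qq h t x) := fun a x => Real.abs_le_sqrt (qq_v h t x a)
  -- the key claim
  have key : ∃ w : Fin 4 → Sp → ℝ, (∀ a, ContDiff ℝ (⊤ : ℕ∞) (w a)) ∧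
      (∀ a, HasCompactSupport (w a)) ∧ (∀ a, ∀ x ∈ E, v a x = w a x) ∧
      ∀ a, ∫ x, ∑ j, (DD j (w a) x) ^ 2 ≤ 6 * ∫ x, 2 * c ^ 2 / jb t ^ 2 * qq h t x := by
    by_cases ht1 : t < 1
    · refine ⟨v, hv, hvs, fun _ _ _ => rfl, fun a => ?_⟩
      have hd : ∀ x j, (DD j (v a) x) ^ 2 ≤ 2 * c ^ 2 / jb t ^ 2 * qq h t x := by
        intro x j
        have h1 : (DD j (v a) x) ^ 2 ≤ qq h t x := by
          rw [hDv]
          fin_cases j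
          · exact qq_G h t x 1 a
          · exact qq_G h t x 2 a
          · exact qq_G h t x 3 a
        have h2 : 1 ≤ 2 * c ^ 2 / jb t ^ 2 := by
          rw [le_div_iff₀ (by positivity), hj2]; nlinarith
        nlinarith [hq0 x]
      rw [← integral_const_mul]
      apply integral_mono_of_nonneg
      · exact Filter.Eventually.of_forall fun x => by positivity
      · exact (hqi.const_mul _).const_mul _
      · refine Filter.Eventually.of_forall fun x => ?_
        have h3 := Finset.sum_le_sum (s := Finset.univ) fun j _ => hd x j
        rw [Finset.sum_const, Finset.card_univ, Fintype.card_fin, nsmul_eq_mul] at h3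
        have h4 : 0 ≤ 2 * c ^ 2 / jb t ^ 2 * qq h t x := mul_nonneg (by positivity) (hq0 x)
        push_cast at h3
        show ∑ j, (DD j (v a) x) ^ 2 ≤ 6 * (2 * c ^ 2 / jb t ^ 2 * qq h t x)
        linarith
    · push Not at ht1
      have htp : 0 < t := by linarith
      have hjt : jb t ^ 2 ≤ 2 * t ^ 2 := by rw [hj2]; nlinarith
      obtain ⟨χ, hχ, hχ01, hχ1, hχ0, hχd⟩ := hcut t htp
      have hDχ : ∀ x j, |t * DD j χ x| ≤ √M := fun x j => Real.abs_le_sqrt (hχd x j)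
      have hDw : ∀ a j x, DD j (fun x => χ x * v a x) x = DD j χ x * v a x + χ x * DD j (v a) x :=
        fun a j x => DD_mul hχ (hv a) j x
      have hχv : ∀ x j a, |(t * DD j χ x) * v a x| ≤ √M * √(qq h t x) := fun x j a => by
        rw [abs_mul]; exact mul_le_mul (hDχ x j) (hvq a x) (abs_nonneg _) hm0
      have hχm : ∀ x y b, (χ x ≠ 0 → |y| ≤ b) → 0 ≤ b → |χ x * y| ≤ b := by
        intro x y b hy hb
        by_cases hz : χ x = 0
        · rw [hz]; simpa using hb
        · rw [abs_mul, abs_of_nonneg (hχ01 x).1]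
          calc χ x * |y| ≤ 1 * b := mul_le_mul (hχ01 x).2 (hy hz) (abs_nonneg _) zero_le_one
            _ = b := one_mul b
      refine ⟨fun a x => χ x * v a x, fun a => hχ.mul (hv a), fun a => (hvs a).mul_left, ?_, ?_⟩
      · intro a x hx
        show v a x = χ x * v a x
        rw [hχ1 x hx, one_mul]
      · have hs0 : ∀ x, 0 ≤ √(qq h t x) := fun x => Real.sqrt_nonneg _
        have hms : ∀ x, 0 ≤ √M * √(qq h t x) := fun x => mul_nonneg hm0 (hs0 x)
        have hLs : ∀ x, 0 ≤ L * √(qq h t x) := fun x => mul_nonneg hL0 (hs0 x)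
        apply grad_bound
        · exact fun a => hχ.mul (hv a)
        · exact fun a => (hvs a).mul_left
        · exact hqi.const_mul _
        · intro x j
          apply sq_le_of_abs (t := t) (by linarith) (hq0 x) hj hjt
          rw [hDw]
          have a1 := hχv x j 0
          have a2 : |χ x * (t * DD j (v 0) x)| ≤ (L + 4) * √(qq h t x) := by
            apply hχm
            · intro hz
              rw [hDv]
              exact (ptw_h hh t htp δ hδ0 x (hχ0 x hz)).2 j
            · have := hs0 x; positivity
          have e : t * (DD j χ x * v 0 x + χ x * DD j (v 0) x) =
            (t * DD j χ x) * v 0 x + χ x * (t * DD j (v 0) x) := by ring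
          rw [e]
          refine (abs_add_le _ _).trans ?_
          rw [hc]
          linarith [hms x]
        · intro x
          apply sq_le_of_abs (t := t) (by linarith) (hq0 x) hj hjt
          simp_rw [hDw]
          have a1 : |∑ j : Fin 3, (t * DD j χ x) * v j.succ x| ≤ (3 : ℕ) * (√M * √(qq h t x)) :=
            abs_sum_le_card _ _ fun j => hχv x j _
          have a2 : |χ x * (t * ∑ j : Fin 3, DD j (v j.succ) x)| ≤ L * √(qq h t x) := by
            apply hχm
            · intro hz
              simp_rw [hDv]
              exact (ptw_h hh t htp δ hδ0 x (hχ0 x hz)).1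
            · exact hLs x
          have e : t * ∑ i : Fin 3, (DD i χ x * v i.succ x + χ x * DD i (v i.succ) x) =
            ∑ j : Fin 3, (t * DD j χ x) * v j.succ x + χ x * (t * ∑ j : Fin 3, DD j (v j.succ) x) := by
            simp only [Fin.sum_univ_three]; ring
          rw [e]
          refine (abs_add_le _ _).trans ?_
          push_cast at a1
          rw [hc]
          linarith [hs0 x]
        · intro x i j
          apply sq_le_of_abs (t := t) (by linarith) (hq0 x) hj hjt
          rw [hDw, hDw]
          have e : t * (DD j χ x * v i.succ x + χ x * DD j (v i.succ) x -
              (DD i χ x * v j.succ x + χ x * DD i (v j.succ) x)) =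
              (t * DD j χ x) * v i.succ x - (t * DD i χ x) * v j.succ x := by
            rw [hDv, hDv, pd_comm hh]; ring
          rw [e]
          refine (abs_sub _ _).trans ?_
          have a1 := hχv x j i.succ
          have a2 := hχv x i j.succ
          rw [hc]
          linarith [hs0 x, hms x, hLs x]
  obtain ⟨w, hw, hws, heq, hP⟩ := key
  have hP' : ∀ a, ∫ x, ∑ j, (DD j (w a) x) ^ 2 ≤ 12 * c ^ 2 * ((jb t)⁻¹ * R) ^ 2 := by
    intro a
    refine (hP a).trans ?_
    rw [integral_const_mul]
    calc 6 * (2 * c ^ 2 / jb t ^ 2 * ∫ x, qq h t x) ≤ 6 * (2 * c ^ 2 / jb t ^ 2 * R ^ 2) := by gcongr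
      _ = _ := by field_simp; ring
  have fin := assemble hK hsob v w hw hws E hEm heq _ hP'
  have hI0 : 0 ≤ ∫ x in E, (∑ a, (v a x) ^ 2) ^ 3 := integral_nonneg fun x => by positivity
  have hz : 0 ≤ (jb t)⁻¹ * R := by positivity
  calc (∫ x in E, (∑ a, (v a x) ^ 2) ^ 3) ^ ((1:ℝ)/6)
      ≤ (64 * K * (12 * c ^ 2 * ((jb t)⁻¹ * R) ^ 2) ^ 3) ^ ((1:ℝ)/6) :=
        Real.rpow_le_rpow hI0 fin (by norm_num)
    _ = ((64 * K * (12 * c ^ 2) ^ 3) * ((jb t)⁻¹ * R) ^ 6) ^ ((1:ℝ)/6) := by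
        congr 1; ring
    _ = (64 * K * (12 * c ^ 2) ^ 3) ^ ((1:ℝ)/6) * ((jb t)⁻¹ * R) := by
        rw [Real.mul_rpow (by positivity) (by positivity)]
        congr 1
        rw [← Real.rpow_natCast, ← Real.rpow_mul hz]
        norm_num
    _ = _ := by ring
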